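/- arXiv:1104.3445 — 3 statements merged into one kernel-verified Lean document; each statement's English description precedes it below -/
import Mathlib

section
/- For any T > 0 and any initial datum ρ(·,0) ∈ L^∞([-1,1],[0,1]), there is at most one function ρ : [-1,1] × (0,T] → [0,1], continuous on [-1,1] × (0,T], satisfying the integral equation ρ(r,t) = ∫_{[-1,1]} P_t(r,r') ρ(r',0) dr' + (j/2) ∫_0^t { P_s(r,1)(1 − ρ(1,t−s)^K) − P_s(r,−1)(1 − (1−ρ(−1,t−s))^K) } ds for all r ∈ [-1,1] and t ∈ (0,T]. -/
open MeasureTheory Filter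

/-- Gaussian kernel `G_t(r,r')`. -/
noncomputable def Gker (t r r' : ℝ) : ℝ :=
  Real.exp (-(r - r')^2 / (2*t)) / Real.sqrt (2*Real.pi*t)

/-- The 4-periodic reflection map `ψ : ℝ → [-1,1]`, with `ψ x = x` on `[-1,1]`
and `ψ x = 2 - x` on `[1,3]` (a triangle wave). -/
noncomputable def psi (x : ℝ) : ℝ := (2/Real.pi) * Real.arcsin (Real.sin (Real.pi * x / 2))

/-- The Neumann heat kernel on `[-1,1]`: `P_t(r,r') = Σ_{r'' : ψ r'' = r'} G_t(r,r'')`,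
with the doubled convention at the endpoints `r' = ±1`. -/
noncomputable def Pker (t r r' : ℝ) : ℝ :=
  if r' = 1 ∨ r' = -1 then ∑' x : {y : ℝ // psi y = r'}, 2 * Gker t r (x : ℝ)
  else ∑' x : {y : ℝ // psi y = r'}, Gker t r (x : ℝ)
/-- Right hand side of the limit integral equation. -/
noncomputable def limitRHS (K : ℕ) (j : ℝ) (ρ0 : ℝ → ℝ) (ρ : ℝ → ℝ → ℝ) (r t : ℝ) : ℝ :=
  (∫ r' in Set.Icc (-1:ℝ) 1, Pker t r r' * ρ0 r')
  + (j/2) * ∫ s in Set.Ioc (0:ℝ) t,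
      (Pker s r 1 * (1 - (ρ 1 (t-s))^K)
        - Pker s r (-1) * (1 - (1 - ρ (-1) (t-s))^K))

/-- `ρ(r,t)` solves the limit integral equation with initial datum `ρ0` for all
`r ∈ [-1,1]` and `t > 0`. -/
def SolvesLimitEq (K : ℕ) (j : ℝ) (ρ0 : ℝ → ℝ) (ρ : ℝ → ℝ → ℝ) : Prop :=
  ∀ r ∈ Set.Icc (-1:ℝ) 1, ∀ t : ℝ, 0 < t → ρ r t = limitRHS K j ρ0 ρ r t

/-!
Subtracting the two integral equations cancels the initial datum, so the difference of the solutions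
depends only on their values at `r = ±1`. The kernels `s ↦ P_s(±1, ±1)` are Jacobi theta functions,
bounded by a multiple of `s ^ (-1/2)` and hence integrable at `s = 0`, while the boundary fluxes are
Lipschitz in `ρ`. The distance `d` between the boundary values therefore satisfies
`d t ≤ ∫₀ᵗ k s * d (t - s) ds` with `k` integrable. In Bielecki's weighted norm `sup e^{-lt} d t`
the right hand side is a contraction once `l` is so large that `∫ k s e^{-ls} ds ≤ 1/2`, whence
`d = 0`.
-/

open Set Topology HurwitzZeta

section Volterra

theorem tendsto_integral_mul_exp_neg_mul_atTop {μ : Measure ℝ} {k : ℝ → ℝ}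
    (hμ : ∀ᵐ s ∂μ, 0 < s) (hk : Integrable k μ) :
    Tendsto (fun l : ℝ ↦ ∫ s, k s * Real.exp (-(l * s)) ∂μ) atTop (𝓝 0) := by
  rw [← integral_zero ℝ ℝ (μ := μ)]
  refine tendsto_integral_filter_of_dominated_convergence (fun s ↦ ‖k s‖)
    (.of_forall fun l ↦ hk.aestronglyMeasurable.mul (by fun_prop)) ?_ hk.norm ?_
  · filter_upwards [eventually_ge_atTop 0] with l hl
    filter_upwards [hμ] with s hs
    rw [norm_mul, Real.norm_of_nonneg (Real.exp_pos _).le]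
    exact mul_le_of_le_one_right (norm_nonneg _)
      (Real.exp_le_one_iff.2 (neg_nonpos.2 (mul_nonneg hl hs.le)))
  · filter_upwards [hμ] with s hs
    have hexp : Tendsto (fun l : ℝ ↦ Real.exp (-(l * s))) atTop (𝓝 0) :=
      Real.tendsto_exp_neg_atTop_nhds_zero.comp (tendsto_id.atTop_mul_const hs)
    simpa using hexp.const_mul (k s)

variable {k d : ℝ → ℝ} {T : ℝ}

theorem integral_mul_comp_sub_le_of_le_mul_exp {M l t : ℝ} (hk : IntegrableOn k (Ioc 0 T))
    (hk0 : ∀ s ∈ Ioc 0 T, 0 ≤ k s) (hd0 : ∀ s ∈ Ioc 0 T, 0 ≤ d s) (hM : 0 ≤ M)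
    (hd : ∀ s ∈ Ioc 0 T, d s ≤ M * Real.exp (l * s)) (ht : t ∈ Ioc 0 T) :
    ∫ s in Ioo 0 t, k s * d (t - s) ≤
      M * Real.exp (l * t) * ∫ s in Ioc 0 T, k s * Real.exp (-(l * s)) := by
  have hsub : Ioo 0 t ⊆ Ioc 0 T := Ioo_subset_Ioc_self.trans (Ioc_subset_Ioc_right ht.2)
  have hrefl : ∀ s ∈ Ioo 0 t, t - s ∈ Ioc 0 T := fun s hs ↦
    ⟨sub_pos.2 hs.2, by linarith [hs.1, ht.2]⟩
  have hint : IntegrableOn (fun s ↦ k s * Real.exp (-(l * s))) (Ioc 0 T) :=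
    hk.mul_continuousOn_of_subset (K := Icc 0 T) (by fun_prop) measurableSet_Ioc isCompact_Icc
      Ioc_subset_Icc_self
  calc ∫ s in Ioo 0 t, k s * d (t - s)
      ≤ ∫ s in Ioo 0 t, M * Real.exp (l * t) * (k s * Real.exp (-(l * s))) := by
        refine integral_mono_of_nonneg ?_ ((hint.mono_set hsub).const_mul _) ?_ <;>
          filter_upwards [ae_restrict_mem measurableSet_Ioo] with s hs
        · exact mul_nonneg (hk0 s (hsub hs)) (hd0 _ (hrefl s hs))
        · have hexp : Real.exp (l * (t - s)) = Real.exp (l * t) * Real.exp (-(l * s)) := by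
            rw [← Real.exp_add]; ring_nf
          calc k s * d (t - s) ≤ k s * (M * Real.exp (l * (t - s))) :=
                mul_le_mul_of_nonneg_left (hd _ (hrefl s hs)) (hk0 s (hsub hs))
            _ = M * Real.exp (l * t) * (k s * Real.exp (-(l * s))) := by rw [hexp]; ring
    _ = M * Real.exp (l * t) * ∫ s in Ioo 0 t, k s * Real.exp (-(l * s)) := integral_const_mul _ _
    _ ≤ M * Real.exp (l * t) * ∫ s in Ioc 0 T, k s * Real.exp (-(l * s)) := by
        refine mul_le_mul_of_nonneg_left (setIntegral_mono_set hint ?_ hsub.eventuallyLE)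
          (by positivity)
        filter_upwards [ae_restrict_mem measurableSet_Ioc] with s hs
        exact mul_nonneg (hk0 s hs) (Real.exp_pos _).le

theorem eq_zero_of_le_integral_mul_comp_sub (hk : IntegrableOn k (Ioc 0 T))
    (hk0 : ∀ s ∈ Ioc 0 T, 0 ≤ k s) (hd0 : ∀ t ∈ Ioc 0 T, 0 ≤ d t) (hdb : BddAbove (d '' Ioc 0 T))
    (hle : ∀ t ∈ Ioc 0 T, d t ≤ ∫ s in Ioo 0 t, k s * d (t - s)) :
    ∀ t ∈ Ioc 0 T, d t = 0 := by
  intro t₀ ht₀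
  obtain ⟨l, hl0, hl⟩ : ∃ l : ℝ, 0 ≤ l ∧ ∫ s in Ioc 0 T, k s * Real.exp (-(l * s)) ≤ 1 / 2 := by
    have hlim := tendsto_integral_mul_exp_neg_mul_atTop
      (ae_restrict_of_forall_mem measurableSet_Ioc fun s hs ↦ hs.1) hk
    exact ((eventually_ge_atTop 0).and (hlim.eventually_le_const (by norm_num))).exists
  set w : ℝ → ℝ := fun t ↦ d t * Real.exp (-(l * t))
  have hwd : ∀ t C, w t ≤ C ↔ d t ≤ C * Real.exp (l * t) := fun t C ↦ by
    rw [← div_le_iff₀ (Real.exp_pos _), div_eq_mul_inv, ← Real.exp_neg]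
  have hwb : BddAbove (w '' Ioc 0 T) := by
    obtain ⟨B, hB⟩ := hdb
    refine ⟨B, forall_mem_image.2 fun t ht ↦ ?_⟩
    exact (mul_le_of_le_one_right (hd0 t ht) (Real.exp_le_one_iff.2
      (neg_nonpos.2 (mul_nonneg hl0 ht.1.le)))).trans (hB (mem_image_of_mem d ht))
  set M := sSup (w '' Ioc 0 T)
  have hwM : ∀ t ∈ Ioc 0 T, w t ≤ M := fun t ht ↦ le_csSup hwb (mem_image_of_mem w ht)
  have hM0 : 0 ≤ M := (mul_nonneg (hd0 t₀ ht₀) (Real.exp_pos _).le).trans (hwM t₀ ht₀)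
  have hcontr : M ≤ M / 2 := by
    refine csSup_le (Set.Nonempty.image w ⟨t₀, ht₀⟩) (forall_mem_image.2 fun t ht ↦ ?_)
    rw [hwd]
    calc d t ≤ M * Real.exp (l * t) * ∫ s in Ioc 0 T, k s * Real.exp (-(l * s)) :=
          (hle t ht).trans (integral_mul_comp_sub_le_of_le_mul_exp hk hk0 hd0 hM0
            (fun s hs ↦ (hwd s M).1 (hwM s hs)) ht)
      _ ≤ M * Real.exp (l * t) * (1 / 2) := by gcongr
      _ = M / 2 * Real.exp (l * t) := by ring
  have hM : M = 0 := by linarith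
  refine le_antisymm ?_ (hd0 t₀ ht₀)
  simpa [hM] using (hwd t₀ M).1 (hwM t₀ ht₀)

theorem integrableOn_mul_comp_sub {φ : ℝ → ℝ} {C t : ℝ} (hk : IntegrableOn k (Ioc 0 T))
    (hφ : ContinuousOn φ (Ioc 0 T)) (hφC : ∀ s ∈ Ioc 0 T, |φ s| ≤ C) (ht : t ≤ T) :
    IntegrableOn (fun s ↦ k s * φ (t - s)) (Ioo 0 t) := by
  have hrefl : MapsTo (fun s ↦ t - s) (Ioo 0 t) (Ioc 0 T) := fun s hs ↦
    ⟨sub_pos.2 hs.2, by linarith [hs.1]⟩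
  refine Integrable.mul_bdd (c := C)
    (hk.mono_set (Ioo_subset_Ioc_self.trans (Ioc_subset_Ioc_right ht)))
    ((hφ.comp (by fun_prop) hrefl).aestronglyMeasurable measurableSet_Ioo) ?_
  filter_upwards [ae_restrict_mem measurableSet_Ioo] with s hs using hφC _ (hrefl hs)

end Volterra

section NeumannKernel

theorem psi_neg (y : ℝ) : psi (-y) = -psi y := by
  simp only [psi, mul_neg, neg_div, Real.sin_neg, Real.arcsin_neg]

theorem psi_eq_one_iff {y : ℝ} : psi y = 1 ↔ ∃ k : ℤ, 1 + 4 * (k : ℝ) = y := by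
  have hpi := Real.pi_pos
  have harcsin : psi y = 1 ↔ Real.arcsin (Real.sin (Real.pi * y / 2)) = Real.pi / 2 := by
    rw [psi, div_mul_eq_mul_div, div_eq_one_iff_eq hpi.ne', eq_div_iff two_ne_zero, mul_comm]
  rw [harcsin, Real.arcsin_eq_pi_div_two, (Real.sin_le_one _).ge_iff_eq, Real.sin_eq_one_iff]
  refine exists_congr fun k ↦ ?_
  rw [← mul_right_inj' hpi.ne' (b := 1 + 4 * (k : ℝ))]
  constructor <;> intro h <;> linarith

theorem psi_eq_iff_of_mem_boundary {e y : ℝ} (he : e ∈ ({-1, 1} : Set ℝ)) :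
    psi y = e ↔ ∃ k : ℤ, e + 4 * (k : ℝ) = y := by
  rcases he with rfl | rfl
  · rw [← neg_inj, neg_neg, ← psi_neg, psi_eq_one_iff]
    refine (Equiv.neg ℤ).exists_congr fun k ↦ ?_
    simp only [Equiv.neg_apply]
    push_cast
    constructor <;> intro h <;> linarith
  · exact psi_eq_one_iff

theorem Gker_nonneg (t r r' : ℝ) : 0 ≤ Gker t r r' := by
  unfold Gker; positivity

theorem Pker_nonneg (t r r' : ℝ) : 0 ≤ Pker t r r' := by
  unfold Pker
  split_ifs
  · exact tsum_nonneg fun _ ↦ mul_nonneg zero_le_two (Gker_nonneg _ _ _)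
  · exact tsum_nonneg fun _ ↦ Gker_nonneg _ _ _

/-- The lattice `e + 4ℤ` as the fibre of `psi` over the boundary point `e`. -/
noncomputable def fibreEquivInt {e : ℝ} (he : e ∈ ({-1, 1} : Set ℝ)) : ℤ ≃ {y : ℝ // psi y = e} :=
  .ofBijective (fun k ↦ ⟨e + 4 * (k : ℝ), (psi_eq_iff_of_mem_boundary he).2 ⟨k, rfl⟩⟩)
    ⟨fun a b hab ↦ by simpa using hab,
      fun y ↦ ((psi_eq_iff_of_mem_boundary he).1 y.2).imp fun _ hk ↦ Subtype.ext hk⟩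

theorem coe_fibreEquivInt {e : ℝ} (he : e ∈ ({-1, 1} : Set ℝ)) (k : ℤ) :
    (fibreEquivInt he k : ℝ) = e + 4 * (k : ℝ) := rfl

theorem Pker_eq_mul_evenKernel {e s : ℝ} (r : ℝ) (he : e ∈ ({-1, 1} : Set ℝ)) (hs : 0 < s) :
    Pker s r e = 2 / √(2 * Real.pi * s) * evenKernel ↑((e - r) / 4) (8 / (Real.pi * s)) := by
  rw [Pker, if_pos (by simpa [or_comm] using he), ← (fibreEquivInt he).tsum_eq,
    ← (hasSum_int_evenKernel ((e - r) / 4) (by positivity)).tsum_eq, ← tsum_mul_left]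
  refine tsum_congr fun k ↦ ?_
  have hexponent : -(r - (e + 4 * (k : ℝ))) ^ 2 / (2 * s) =
      -Real.pi * (k + (e - r) / 4) ^ 2 * (8 / (Real.pi * s)) := by
    field_simp; ring
  rw [coe_fibreEquivInt, Gker, hexponent]
  ring

theorem antitoneOn_evenKernel (a : ℝ) : AntitoneOn (evenKernel a) (Ioi 0) := by
  intro x hx y hy hxy
  refine hasSum_le (fun n ↦ Real.exp_le_exp.2 ?_)
    (hasSum_int_evenKernel a hy) (hasSum_int_evenKernel a hx)
  exact mul_le_mul_of_nonpos_left hxy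
    (mul_nonpos_of_nonpos_of_nonneg (neg_nonpos.2 Real.pi_pos.le) (sq_nonneg _))

theorem continuousOn_Pker {e : ℝ} (r : ℝ) (he : e ∈ ({-1, 1} : Set ℝ)) :
    ContinuousOn (fun s ↦ Pker s r e) (Ioi 0) := by
  refine ContinuousOn.congr ?_ fun s hs ↦ Pker_eq_mul_evenKernel r he hs
  refine .mul (.div (by fun_prop) (by fun_prop) fun s (hs : 0 < s) ↦ by positivity)
    ((continuousOn_evenKernel _).comp (.div (by fun_prop) (by fun_prop) fun s (hs : 0 < s) ↦ ?_)
      fun s (hs : 0 < s) ↦ ?_)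
  · positivity
  · exact mem_Ioi.2 (by positivity)

theorem Pker_le_mul_rpow {e s T : ℝ} (r : ℝ) (he : e ∈ ({-1, 1} : Set ℝ)) (hs : s ∈ Ioc 0 T) :
    Pker s r e ≤
      2 / √(2 * Real.pi) * evenKernel ↑((e - r) / 4) (8 / (Real.pi * T)) * s ^ (-(1 / 2) : ℝ) := by
  have hs0 : 0 < s := hs.1
  have hT : 0 < T := hs0.trans_le hs.2
  have hmono : evenKernel ↑((e - r) / 4) (8 / (Real.pi * s)) ≤
      evenKernel ↑((e - r) / 4) (8 / (Real.pi * T)) :=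
    antitoneOn_evenKernel _ (mem_Ioi.2 (by positivity)) (mem_Ioi.2 (by positivity))
      (by gcongr; exact hs.2)
  calc Pker s r e
      = 2 / √(2 * Real.pi * s) * evenKernel ↑((e - r) / 4) (8 / (Real.pi * s)) :=
        Pker_eq_mul_evenKernel r he hs0
    _ ≤ 2 / √(2 * Real.pi * s) * evenKernel ↑((e - r) / 4) (8 / (Real.pi * T)) := by gcongr
    _ = _ := by
        rw [Real.sqrt_mul (by positivity), Real.rpow_neg hs0.le, ← Real.sqrt_eq_rpow]
        ring

theorem integrableOn_Pker {e : ℝ} (r T : ℝ) (he : e ∈ ({-1, 1} : Set ℝ)) :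
    IntegrableOn (fun s ↦ Pker s r e) (Ioc 0 T) := by
  have hrpow : IntegrableOn (fun s : ℝ ↦ s ^ (-(1 / 2) : ℝ)) (Ioc 0 T) :=
    (intervalIntegral.intervalIntegrable_rpow' (by norm_num)).1
  refine Integrable.mono' (hrpow.const_mul
      (2 / √(2 * Real.pi) * evenKernel ↑((e - r) / 4) (8 / (Real.pi * T))))
    (((continuousOn_Pker r he).mono Ioc_subset_Ioi_self).aestronglyMeasurable measurableSet_Ioc)
    (ae_restrict_of_forall_mem measurableSet_Ioc fun s hs ↦ ?_)
  rw [Real.norm_of_nonneg (Pker_nonneg _ _ _)]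
  exact Pker_le_mul_rpow r he hs

end NeumannKernel

section BoundaryFlux

/-- The boundary integrand of the equation: at time `t - s`, mass enters at `1` at rate
`f (ρ 1 (t - s))` and leaves at `-1` at rate `g (ρ (-1) (t - s))`, and is carried to `r` by the
Neumann heat kernel. The limit equation has `f x = 1 - x ^ K` and `g x = 1 - (1 - x) ^ K`. -/
noncomputable def boundaryFlux (f g : ℝ → ℝ) (ρ : ℝ → ℝ → ℝ) (r t s : ℝ) : ℝ :=
  Pker s r 1 * f (ρ 1 (t - s)) - Pker s r (-1) * g (ρ (-1) (t - s))

/-- The boundary traces `ρ(±1, ·)` are continuous on `(0, T]` with values in `S`. -/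
def HasTracesIn (S : Set ℝ) (T : ℝ) (ρ : ℝ → ℝ → ℝ) : Prop :=
  ∀ e ∈ ({-1, 1} : Set ℝ), ContinuousOn (ρ e) (Ioc 0 T) ∧ MapsTo (ρ e) (Ioc 0 T) S

/-- The distance at time `t` between the boundary traces of `ρ₁` and `ρ₂`. -/
def traceDist (ρ₁ ρ₂ : ℝ → ℝ → ℝ) (t : ℝ) : ℝ :=
  |ρ₁ 1 t - ρ₂ 1 t| + |ρ₁ (-1) t - ρ₂ (-1) t|

/-- The kernel `P_s(r,1) + P_s(r,-1)` that carries the boundary values to `r`. -/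
noncomputable def boundaryKernel (r s : ℝ) : ℝ := Pker s r 1 + Pker s r (-1)

theorem boundaryKernel_nonneg (r s : ℝ) : 0 ≤ boundaryKernel r s :=
  add_nonneg (Pker_nonneg _ _ _) (Pker_nonneg _ _ _)

theorem integrableOn_boundaryKernel (r T : ℝ) : IntegrableOn (boundaryKernel r) (Ioc 0 T) :=
  (integrableOn_Pker r T (by simp)).add (integrableOn_Pker r T (by simp))

theorem traceDist_nonneg (ρ₁ ρ₂ : ℝ → ℝ → ℝ) (t : ℝ) : 0 ≤ traceDist ρ₁ ρ₂ t := by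
  unfold traceDist; positivity

theorem traceDist_eq_zero_iff {ρ₁ ρ₂ : ℝ → ℝ → ℝ} {t : ℝ} :
    traceDist ρ₁ ρ₂ t = 0 ↔ ρ₁ 1 t = ρ₂ 1 t ∧ ρ₁ (-1) t = ρ₂ (-1) t := by
  rw [traceDist, add_eq_zero_iff_of_nonneg (abs_nonneg _) (abs_nonneg _), abs_eq_zero, abs_eq_zero,
    sub_eq_zero, sub_eq_zero]

variable {f g : ℝ → ℝ} {S : Set ℝ} {T : ℝ} {L : NNReal} {ρ ρ₁ ρ₂ : ℝ → ℝ → ℝ}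

theorem HasTracesIn.of_continuousOn
    (hc : ContinuousOn (Function.uncurry ρ) (Icc (-1) 1 ×ˢ Ioc 0 T))
    (hv : ∀ r ∈ Icc (-1 : ℝ) 1, ∀ t ∈ Ioc 0 T, ρ r t ∈ S) : HasTracesIn S T ρ := by
  intro e he
  have he' : e ∈ Icc (-1 : ℝ) 1 := by rcases he with rfl | rfl <;> norm_num
  exact ⟨hc.uncurry_left e he', hv e he'⟩

theorem HasTracesIn.continuousOn_traceDist (h₁ : HasTracesIn S T ρ₁) (h₂ : HasTracesIn S T ρ₂) :
    ContinuousOn (traceDist ρ₁ ρ₂) (Ioc 0 T) :=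
  ((h₁ 1 (by simp)).1.sub (h₂ 1 (by simp)).1).abs.add
    ((h₁ (-1) (by simp)).1.sub (h₂ (-1) (by simp)).1).abs

theorem HasTracesIn.traceDist_le (hS : Bornology.IsBounded S) (h₁ : HasTracesIn S T ρ₁)
    (h₂ : HasTracesIn S T ρ₂) {t : ℝ} (ht : t ∈ Ioc 0 T) :
    traceDist ρ₁ ρ₂ t ≤ 2 * Metric.diam S := by
  rw [two_mul]
  exact add_le_add
    (Metric.dist_le_diam_of_mem hS ((h₁ 1 (by simp)).2 ht) ((h₂ 1 (by simp)).2 ht))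
    (Metric.dist_le_diam_of_mem hS ((h₁ (-1) (by simp)).2 ht) ((h₂ (-1) (by simp)).2 ht))

theorem HasTracesIn.integrableOn_boundaryKernel_mul_traceDist (hS : Bornology.IsBounded S)
    (h₁ : HasTracesIn S T ρ₁) (h₂ : HasTracesIn S T ρ₂) (r : ℝ) {t : ℝ} (ht : t ≤ T) :
    IntegrableOn (fun s ↦ boundaryKernel r s * traceDist ρ₁ ρ₂ (t - s)) (Ioo 0 t) := by
  refine integrableOn_mul_comp_sub (C := 2 * Metric.diam S) (integrableOn_boundaryKernel r T)
    (h₁.continuousOn_traceDist h₂) (fun s hs ↦ ?_) ht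
  rw [abs_of_nonneg (traceDist_nonneg _ _ _)]
  exact h₁.traceDist_le hS h₂ hs

theorem HasTracesIn.integrableOn_boundaryFlux (hS : IsCompact S) (hf : ContinuousOn f S)
    (hg : ContinuousOn g S) (h : HasTracesIn S T ρ) (r : ℝ) {t : ℝ} (ht : t ≤ T) :
    IntegrableOn (boundaryFlux f g ρ r t) (Ioo 0 t) := by
  have hterm : ∀ {q : ℝ → ℝ}, ContinuousOn q S → ∀ e ∈ ({-1, 1} : Set ℝ),
      IntegrableOn (fun s ↦ Pker s r e * q (ρ e (t - s))) (Ioo 0 t) := by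
    intro q hq e he
    obtain ⟨C, hC⟩ := hS.exists_bound_of_continuousOn hq
    exact integrableOn_mul_comp_sub (integrableOn_Pker r T he) (hq.comp (h e he).1 (h e he).2)
      (fun s hs ↦ hC _ ((h e he).2 hs)) ht
  exact (hterm hf 1 (by simp)).sub (hterm hg (-1) (by simp))

theorem HasTracesIn.abs_boundaryFlux_sub_le (hf : LipschitzOnWith L f S)
    (hg : LipschitzOnWith L g S) (h₁ : HasTracesIn S T ρ₁) (h₂ : HasTracesIn S T ρ₂)
    (r : ℝ) {s t : ℝ} (hts : t - s ∈ Ioc 0 T) :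
    |boundaryFlux f g ρ₁ r t s - boundaryFlux f g ρ₂ r t s| ≤
      L * (boundaryKernel r s * traceDist ρ₁ ρ₂ (t - s)) := by
  have hterm : ∀ {q : ℝ → ℝ}, LipschitzOnWith L q S → ∀ e ∈ ({-1, 1} : Set ℝ),
      |Pker s r e * (q (ρ₁ e (t - s)) - q (ρ₂ e (t - s)))| ≤
        Pker s r e * (L * |ρ₁ e (t - s) - ρ₂ e (t - s)|) := by
    intro q hq e he
    rw [abs_mul, abs_of_nonneg (Pker_nonneg _ _ _)]
    exact mul_le_mul_of_nonneg_left (hq.dist_le_mul _ ((h₁ e he).2 hts) _ ((h₂ e he).2 hts))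
      (Pker_nonneg _ _ _)
  have hcross₁ : 0 ≤ Pker s r 1 * (L * |ρ₁ (-1) (t - s) - ρ₂ (-1) (t - s)|) :=
    mul_nonneg (Pker_nonneg _ _ _) (by positivity)
  have hcross₂ : 0 ≤ Pker s r (-1) * (L * |ρ₁ 1 (t - s) - ρ₂ 1 (t - s)|) :=
    mul_nonneg (Pker_nonneg _ _ _) (by positivity)
  calc |boundaryFlux f g ρ₁ r t s - boundaryFlux f g ρ₂ r t s|
      = |Pker s r 1 * (f (ρ₁ 1 (t - s)) - f (ρ₂ 1 (t - s)))
          - Pker s r (-1) * (g (ρ₁ (-1) (t - s)) - g (ρ₂ (-1) (t - s)))| := by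
        simp only [boundaryFlux]; ring_nf
    _ ≤ Pker s r 1 * (L * |ρ₁ 1 (t - s) - ρ₂ 1 (t - s)|)
          + Pker s r (-1) * (L * |ρ₁ (-1) (t - s) - ρ₂ (-1) (t - s)|) :=
        (abs_sub _ _).trans (add_le_add (hterm hf 1 (by simp)) (hterm hg (-1) (by simp)))
    _ ≤ L * (boundaryKernel r s * traceDist ρ₁ ρ₂ (t - s)) := by
        simp only [boundaryKernel, traceDist]; linarith

theorem HasTracesIn.abs_integral_boundaryFlux_sub_le (hS : IsCompact S)
    (hf : LipschitzOnWith L f S) (hg : LipschitzOnWith L g S) (h₁ : HasTracesIn S T ρ₁)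
    (h₂ : HasTracesIn S T ρ₂) (r : ℝ) {t : ℝ} (ht : t ≤ T) :
    |(∫ s in Ioo 0 t, boundaryFlux f g ρ₁ r t s) - ∫ s in Ioo 0 t, boundaryFlux f g ρ₂ r t s| ≤
      L * ∫ s in Ioo 0 t, boundaryKernel r s * traceDist ρ₁ ρ₂ (t - s) := by
  rw [← integral_sub (h₁.integrableOn_boundaryFlux hS hf.continuousOn hg.continuousOn r ht)
    (h₂.integrableOn_boundaryFlux hS hf.continuousOn hg.continuousOn r ht),
    ← integral_const_mul (L : ℝ), ← Real.norm_eq_abs]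
  refine norm_integral_le_of_norm_le
    ((h₁.integrableOn_boundaryKernel_mul_traceDist hS.isBounded h₂ r ht).const_mul _)
    (ae_restrict_of_forall_mem measurableSet_Ioo fun s hs ↦ ?_)
  exact h₁.abs_boundaryFlux_sub_le hf hg h₂ r ⟨sub_pos.2 hs.2, by linarith [hs.1]⟩

end BoundaryFlux

section Uniqueness

variable {f g : ℝ → ℝ} {S : Set ℝ} {c T : ℝ} {L : NNReal} {h ρ₁ ρ₂ : ℝ → ℝ → ℝ}

theorem HasTracesIn.traceDist_le_integral (hS : IsCompact S) (hf : LipschitzOnWith L f S)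
    (hg : LipschitzOnWith L g S) (hρ₁ : HasTracesIn S T ρ₁) (hρ₂ : HasTracesIn S T ρ₂) {t : ℝ}
    (ht : t ≤ T)
    (he₁ : ∀ e ∈ ({-1, 1} : Set ℝ),
      ρ₁ e t = h e t + c * ∫ s in Ioc 0 t, boundaryFlux f g ρ₁ e t s)
    (he₂ : ∀ e ∈ ({-1, 1} : Set ℝ),
      ρ₂ e t = h e t + c * ∫ s in Ioc 0 t, boundaryFlux f g ρ₂ e t s) :
    traceDist ρ₁ ρ₂ t ≤ ∫ s in Ioo 0 t,
      |c| * L * (boundaryKernel 1 s + boundaryKernel (-1) s) * traceDist ρ₁ ρ₂ (t - s) := by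
  have htrace : ∀ e ∈ ({-1, 1} : Set ℝ), |ρ₁ e t - ρ₂ e t| ≤
      |c| * L * ∫ s in Ioo 0 t, boundaryKernel e s * traceDist ρ₁ ρ₂ (t - s) := by
    intro e he
    rw [he₁ e he, he₂ e he, add_sub_add_left_eq_sub, ← mul_sub, abs_mul, mul_assoc,
      integral_Ioc_eq_integral_Ioo, integral_Ioc_eq_integral_Ioo]
    exact mul_le_mul_of_nonneg_left (hρ₁.abs_integral_boundaryFlux_sub_le hS hf hg hρ₂ e ht)
      (abs_nonneg c)
  calc traceDist ρ₁ ρ₂ t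
      ≤ |c| * L * (∫ s in Ioo 0 t, boundaryKernel 1 s * traceDist ρ₁ ρ₂ (t - s))
        + |c| * L * ∫ s in Ioo 0 t, boundaryKernel (-1) s * traceDist ρ₁ ρ₂ (t - s) :=
        add_le_add (htrace 1 (by simp)) (htrace (-1) (by simp))
    _ = _ := by
        rw [← mul_add, ← integral_add
          (hρ₁.integrableOn_boundaryKernel_mul_traceDist hS.isBounded hρ₂ 1 ht)
          (hρ₁.integrableOn_boundaryKernel_mul_traceDist hS.isBounded hρ₂ (-1) ht),
          ← integral_const_mul]
        simp only [add_mul, mul_assoc, mul_add]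

theorem HasTracesIn.traceDist_eq_zero (hS : IsCompact S) (hf : LipschitzOnWith L f S)
    (hg : LipschitzOnWith L g S) (hρ₁ : HasTracesIn S T ρ₁) (hρ₂ : HasTracesIn S T ρ₂)
    (he₁ : ∀ e ∈ ({-1, 1} : Set ℝ), ∀ t ∈ Ioc 0 T,
      ρ₁ e t = h e t + c * ∫ s in Ioc 0 t, boundaryFlux f g ρ₁ e t s)
    (he₂ : ∀ e ∈ ({-1, 1} : Set ℝ), ∀ t ∈ Ioc 0 T,
      ρ₂ e t = h e t + c * ∫ s in Ioc 0 t, boundaryFlux f g ρ₂ e t s) :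
    ∀ t ∈ Ioc 0 T, traceDist ρ₁ ρ₂ t = 0 := by
  refine eq_zero_of_le_integral_mul_comp_sub
    (k := fun s ↦ |c| * L * (boundaryKernel 1 s + boundaryKernel (-1) s))
    (((integrableOn_boundaryKernel 1 T).add (integrableOn_boundaryKernel (-1) T)).const_mul _)
    (fun s _ ↦ ?_) (fun t _ ↦ traceDist_nonneg _ _ t)
    ⟨2 * Metric.diam S, forall_mem_image.2 fun t ht ↦ hρ₁.traceDist_le hS.isBounded hρ₂ ht⟩
    fun t ht ↦ hρ₁.traceDist_le_integral hS hf hg hρ₂ ht.2 (fun e he ↦ he₁ e he t ht)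
      (fun e he ↦ he₂ e he t ht)
  exact mul_nonneg (by positivity)
    (add_nonneg (boundaryKernel_nonneg _ _) (boundaryKernel_nonneg _ _))

theorem integral_boundaryFlux_congr {t : ℝ} (htrace : ∀ s ∈ Ioo 0 t, traceDist ρ₁ ρ₂ s = 0)
    (r : ℝ) :
    ∫ s in Ioc 0 t, boundaryFlux f g ρ₁ r t s = ∫ s in Ioc 0 t, boundaryFlux f g ρ₂ r t s := by
  rw [integral_Ioc_eq_integral_Ioo, integral_Ioc_eq_integral_Ioo]
  refine setIntegral_congr_fun measurableSet_Ioo fun s hs ↦ ?_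
  obtain ⟨hright, hleft⟩ :=
    traceDist_eq_zero_iff.1 (htrace (t - s) ⟨sub_pos.2 hs.2, sub_lt_self t hs.1⟩)
  simp only [boundaryFlux, hright, hleft]

theorem limit_equation_uniqueness_general (hS : IsCompact S) (hf : LocallyLipschitzOn S f)
    (hg : LocallyLipschitzOn S g) (hρ₁ : HasTracesIn S T ρ₁) (hρ₂ : HasTracesIn S T ρ₂)
    (he₁ : ∀ r ∈ Icc (-1 : ℝ) 1, ∀ t ∈ Ioc 0 T,
      ρ₁ r t = h r t + c * ∫ s in Ioc 0 t, boundaryFlux f g ρ₁ r t s)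
    (he₂ : ∀ r ∈ Icc (-1 : ℝ) 1, ∀ t ∈ Ioc 0 T,
      ρ₂ r t = h r t + c * ∫ s in Ioc 0 t, boundaryFlux f g ρ₂ r t s) :
    ∀ r ∈ Icc (-1 : ℝ) 1, ∀ t ∈ Ioc 0 T, ρ₁ r t = ρ₂ r t := by
  intro r hr t ht
  obtain ⟨Lf, hLf⟩ := hf.exists_lipschitzOnWith_of_compact hS
  obtain ⟨Lg, hLg⟩ := hg.exists_lipschitzOnWith_of_compact hS
  have hboundary : ({-1, 1} : Set ℝ) ⊆ Icc (-1) 1 := pair_subset (by norm_num) (by norm_num)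
  have htrace : ∀ s ∈ Ioc 0 T, traceDist ρ₁ ρ₂ s = 0 :=
    hρ₁.traceDist_eq_zero hS (hLf.weaken (le_max_left Lf Lg)) (hLg.weaken (le_max_right Lf Lg)) hρ₂
      (fun e he ↦ he₁ e (hboundary he)) (fun e he ↦ he₂ e (hboundary he))
  rw [he₁ r hr t ht, he₂ r hr t ht,
    integral_boundaryFlux_congr fun s hs ↦ htrace s ⟨hs.1, hs.2.le.trans ht.2⟩]

end Uniqueness

/-- **Uniqueness of the solution of the limit integral equation.**
For any `T > 0` and initial datum `ρ0 ∈ L^∞([-1,1],[0,1])`, two `[0,1]`-valued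
functions, continuous on `[-1,1] × (0,T]` and satisfying the limit integral
equation there, coincide on `[-1,1] × (0,T]`. -/
theorem limit_equation_uniqueness
    (K : ℕ) (hK : 1 ≤ K) (j : ℝ) (hj : 0 < j) (T : ℝ) (hT : 0 < T)
    (ρ0 : ℝ → ℝ) (hρ0meas : Measurable ρ0)
    (hρ0val : ∀ r ∈ Set.Icc (-1:ℝ) 1, ρ0 r ∈ Set.Icc (0:ℝ) 1)
    (ρ1 ρ2 : ℝ → ℝ → ℝ)
    (hc1 : ContinuousOn (fun p : ℝ × ℝ => ρ1 p.1 p.2) (Set.Icc (-1:ℝ) 1 ×ˢ Set.Ioc (0:ℝ) T))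
    (hc2 : ContinuousOn (fun p : ℝ × ℝ => ρ2 p.1 p.2) (Set.Icc (-1:ℝ) 1 ×ˢ Set.Ioc (0:ℝ) T))
    (hv1 : ∀ r ∈ Set.Icc (-1:ℝ) 1, ∀ t ∈ Set.Ioc (0:ℝ) T, ρ1 r t ∈ Set.Icc (0:ℝ) 1)
    (hv2 : ∀ r ∈ Set.Icc (-1:ℝ) 1, ∀ t ∈ Set.Ioc (0:ℝ) T, ρ2 r t ∈ Set.Icc (0:ℝ) 1)
    (he1 : ∀ r ∈ Set.Icc (-1:ℝ) 1, ∀ t ∈ Set.Ioc (0:ℝ) T, ρ1 r t = limitRHS K j ρ0 ρ1 r t)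
    (he2 : ∀ r ∈ Set.Icc (-1:ℝ) 1, ∀ t ∈ Set.Ioc (0:ℝ) T, ρ2 r t = limitRHS K j ρ0 ρ2 r t) :
    ∀ r ∈ Set.Icc (-1:ℝ) 1, ∀ t ∈ Set.Ioc (0:ℝ) T, ρ1 r t = ρ2 r t := by
  exact limit_equation_uniqueness_general (f := fun x ↦ 1 - x ^ K) (g := fun x ↦ 1 - (1 - x) ^ K)
    (h := fun r t ↦ ∫ r' in Icc (-1) 1, Pker t r r' * ρ0 r') isCompact_Icc
    (ContDiff.locallyLipschitz (𝕂 := ℝ) (by fun_prop)).locallyLipschitzOn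
    (ContDiff.locallyLipschitz (𝕂 := ℝ) (by fun_prop)).locallyLipschitzOn
    (.of_continuousOn hc1 hv1) (.of_continuousOn hc2 hv2) he1 he2
end

section
/- For every positive integer n and every t > 0, the iterated integral a_n(t) := ∫_{[0,t]^n} 1_{s_1+⋯+s_n ≤ t} ∏_{i=1}^n s_i^{−1/2} ds_1 ⋯ ds_n satisfies a_n(t) ≤ (πt)^{n/2} · e^{−(n/2)(log(n/2) − 1)}. -/
/-!
This is a Chernoff bound. For `l > 0` the indicator of `∑ sᵢ ≤ t` is at most `e^{l (t - ∑ sᵢ)}`,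
and this majorant factorises over the coordinates: by Fubini the integral of `∏ sᵢ^{aᵢ - 1}` is at
most `e^{l t} ∏ Γ(aᵢ) l^{-aᵢ}`. The best choice is `l = (∑ aᵢ) / t`; here `aᵢ = 1/2` and
`Γ(1/2) = √π`.
-/

open MeasureTheory Filter


/-- The iterated integral
`a_n(t) = ∫_{[0,t]^n} 1_{s₁+⋯+sₙ ≤ t} ∏ᵢ sᵢ^{-1/2} ds₁⋯dsₙ`. -/
noncomputable def aFun (n : ℕ) (t : ℝ) : ℝ :=
  ∫ s : Fin n → ℝ in
    {s : Fin n → ℝ | (∀ i, s i ∈ Set.Icc (0:ℝ) t) ∧ (∑ i, s i) ≤ t},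
    ∏ i, (s i) ^ (-(1:ℝ)/2)

section Chernoff

variable {Ω : Type*} [MeasurableSpace Ω] {μ : Measure Ω} {S T : Set Ω} {g X : Ω → ℝ} {l t : ℝ}

theorem setIntegral_le_exp_mul_setIntegral_mul_exp_neg (hl : 0 ≤ l) (hS : MeasurableSet S)
    (hT : MeasurableSet T) (hST : S ⊆ T) (hg : ∀ ω ∈ T, 0 ≤ g ω) (hX : ∀ ω ∈ S, X ω ≤ t)
    (hint : IntegrableOn (fun ω ↦ g ω * Real.exp (-(l * X ω))) T μ) :
    ∫ ω in S, g ω ∂μ ≤ Real.exp (l * t) * ∫ ω in T, g ω * Real.exp (-(l * X ω)) ∂μ := by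
  have hint' : IntegrableOn (fun ω ↦ Real.exp (l * t) * (g ω * Real.exp (-(l * X ω)))) T μ :=
    hint.const_mul _
  have le_tilted : ∀ ω ∈ S, g ω ≤ Real.exp (l * t) * (g ω * Real.exp (-(l * X ω))) := by
    intro ω hω
    rw [mul_left_comm, ← Real.exp_add]
    have : l * X ω ≤ l * t := mul_le_mul_of_nonneg_left (hX ω hω) hl
    exact le_mul_of_one_le_right (hg ω (hST hω)) (Real.one_le_exp (by linarith))
  rw [← integral_const_mul]
  calc ∫ ω in S, g ω ∂μ
    _ ≤ ∫ ω in S, Real.exp (l * t) * (g ω * Real.exp (-(l * X ω))) ∂μ :=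
      integral_mono_of_nonneg (ae_restrict_of_forall_mem hS fun ω hω ↦ hg ω (hST hω))
        (hint'.mono_set hST) (ae_restrict_of_forall_mem hS le_tilted)
    _ ≤ ∫ ω in T, Real.exp (l * t) * (g ω * Real.exp (-(l * X ω))) ∂μ :=
      setIntegral_mono_set hint'
        (ae_restrict_of_forall_mem hT fun ω hω ↦ by have := hg ω hω; positivity)
        hST.eventuallyLE

end Chernoff

section SolidSimplex

/-- The solid simplex of nonnegative vectors with coordinate sum at most `t`, the domain of the
Dirichlet integrals below. -/
def solidSimplex (ι : Type*) [Fintype ι] (t : ℝ) : Set (ι → ℝ) :=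
  {s | (∀ i, 0 ≤ s i) ∧ ∑ i, s i ≤ t}

variable {ι : Type*} [Fintype ι]

theorem solidSimplex_eq_setOf_mem_Icc (t : ℝ) :
    solidSimplex ι t = {s | (∀ i, s i ∈ Set.Icc 0 t) ∧ ∑ i, s i ≤ t} := by
  ext s
  refine ⟨fun ⟨nonneg, sum_le⟩ ↦ ⟨fun i ↦ ⟨nonneg i, ?_⟩, sum_le⟩,
    fun ⟨mem_Icc, sum_le⟩ ↦ ⟨fun i ↦ (mem_Icc i).1, sum_le⟩⟩
  exact (Finset.single_le_sum (fun j _ ↦ nonneg j) (Finset.mem_univ i)).trans sum_le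

theorem solidSimplex_subset_pi_Ici (t : ℝ) :
    solidSimplex ι t ⊆ Set.univ.pi fun _ ↦ Set.Ici 0 :=
  fun _ hs i _ ↦ hs.1 i

theorem measurableSet_solidSimplex (t : ℝ) : MeasurableSet (solidSimplex ι t) := by
  unfold solidSimplex
  measurability

theorem setIntegral_solidSimplex_prod_le_exp_mul_prod {f : ι → ℝ → ℝ} {l : ℝ} (t : ℝ) (hl : 0 ≤ l)
    (hf : ∀ i, ∀ x ∈ Set.Ici 0, 0 ≤ f i x)
    (hint : ∀ i, IntegrableOn (fun x ↦ f i x * Real.exp (-(l * x))) (Set.Ici 0)) :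
    ∫ s in solidSimplex ι t, ∏ i, f i (s i) ≤
      Real.exp (l * t) * ∏ i, ∫ x in Set.Ici 0, f i x * Real.exp (-(l * x)) := by
  have restrict_volume : (volume : Measure (ι → ℝ)).restrict (Set.univ.pi fun _ ↦ Set.Ici 0) =
      Measure.pi fun _ ↦ volume.restrict (Set.Ici 0) := by
    rw [volume_pi, Measure.restrict_pi_pi]
  have prod_mul_exp (s : ι → ℝ) : (∏ i, f i (s i)) * Real.exp (-(l * ∑ i, s i)) =
      ∏ i, f i (s i) * Real.exp (-(l * s i)) := by
    rw [Finset.prod_mul_distrib, ← Real.exp_sum, Finset.sum_neg_distrib, Finset.mul_sum]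
  have integrable_prod : IntegrableOn (fun s ↦ (∏ i, f i (s i)) * Real.exp (-(l * ∑ i, s i)))
      (Set.univ.pi fun _ ↦ Set.Ici 0) := by
    simpa only [prod_mul_exp, IntegrableOn, restrict_volume] using Integrable.fintype_prod_dep hint
  calc ∫ s in solidSimplex ι t, ∏ i, f i (s i)
    _ ≤ Real.exp (l * t) * ∫ s in Set.univ.pi fun _ ↦ Set.Ici 0,
          (∏ i, f i (s i)) * Real.exp (-(l * ∑ i, s i)) :=
      setIntegral_le_exp_mul_setIntegral_mul_exp_neg hl (measurableSet_solidSimplex t)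
        (.univ_pi fun _ ↦ measurableSet_Ici) (solidSimplex_subset_pi_Ici t)
        (fun s hs ↦ Finset.prod_nonneg fun i _ ↦ hf i (s i) (hs i trivial)) (fun s hs ↦ hs.2)
        integrable_prod
    _ = Real.exp (l * t) * ∏ i, ∫ x in Set.Ici 0, f i x * Real.exp (-(l * x)) := by
      simp only [prod_mul_exp, restrict_volume]
      rw [integral_fintype_prod_eq_prod (f := fun i x ↦ f i x * Real.exp (-(l * x)))]

end SolidSimplex

section Dirichlet

theorem integral_Ici_rpow_mul_exp_neg_mul {a l : ℝ} (ha : 0 < a) (hl : 0 < l) :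
    ∫ x in Set.Ici 0, x ^ (a - 1) * Real.exp (-(l * x)) = (1 / l) ^ a * Real.Gamma a := by
  rw [integral_Ici_eq_integral_Ioi, Real.integral_rpow_mul_exp_neg_mul_Ioi ha hl]

theorem integrableOn_Ici_rpow_mul_exp_neg_mul {a l : ℝ} (ha : 0 < a) (hl : 0 < l) :
    IntegrableOn (fun x : ℝ ↦ x ^ (a - 1) * Real.exp (-(l * x))) (Set.Ici 0) := by
  apply Integrable.of_integral_ne_zero
  rw [integral_Ici_rpow_mul_exp_neg_mul ha hl]
  have := Real.Gamma_pos_of_pos ha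
  positivity

variable {ι : Type*} [Fintype ι] {a : ι → ℝ}

theorem setIntegral_solidSimplex_prod_rpow_le_exp_mul {l : ℝ} (t : ℝ) (ha : ∀ i, 0 < a i)
    (hl : 0 < l) :
    ∫ s in solidSimplex ι t, ∏ i, s i ^ (a i - 1) ≤
      Real.exp (l * t) * ((1 / l) ^ (∑ i, a i) * ∏ i, Real.Gamma (a i)) := by
  have bound := setIntegral_solidSimplex_prod_le_exp_mul_prod (f := fun i x ↦ x ^ (a i - 1)) t hl.le
    (fun i x hx ↦ Real.rpow_nonneg hx _)
    (fun i ↦ integrableOn_Ici_rpow_mul_exp_neg_mul (ha i) hl)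
  simpa only [integral_Ici_rpow_mul_exp_neg_mul (ha _) hl, Finset.prod_mul_distrib,
    ← Real.rpow_sum_of_pos (one_div_pos.2 hl)] using bound

theorem setIntegral_solidSimplex_prod_rpow_le [Nonempty ι] {t : ℝ} (ha : ∀ i, 0 < a i)
    (ht : 0 < t) :
    ∫ s in solidSimplex ι t, ∏ i, s i ^ (a i - 1) ≤
      (∏ i, Real.Gamma (a i)) * t ^ (∑ i, a i) *
        Real.exp (-(∑ i, a i) * (Real.log (∑ i, a i) - 1)) := by
  have bound (l : ℝ) (hl : 0 < l) := setIntegral_solidSimplex_prod_rpow_le_exp_mul t ha hl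
  have hA : 0 < ∑ i, a i := Finset.sum_pos (fun i _ ↦ ha i) Finset.univ_nonempty
  generalize ∑ i, a i = A at bound hA ⊢
  -- `l = A / t` minimises `exp (l * t) * l ^ (-A)`.
  convert bound (A / t) (div_pos hA ht) using 1
  have exp_eq : Real.exp (-A * (Real.log A - 1)) = Real.exp A * (A ^ A)⁻¹ := by
    rw [Real.rpow_def_of_pos hA, ← Real.exp_neg, ← Real.exp_add]
    ring_nf
  rw [exp_eq, div_mul_cancel₀ A ht.ne', one_div_div, Real.div_rpow ht.le hA.le]
  ring

end Dirichlet

theorem aFun_eq_setIntegral_solidSimplex (n : ℕ) (t : ℝ) :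
    aFun n t = ∫ s in solidSimplex (Fin n) t, ∏ i, s i ^ ((1 / 2 : ℝ) - 1) := by
  rw [aFun, solidSimplex_eq_setOf_mem_Icc]
  norm_num

/-- **Bound on the iterated integral** (Lemma 5.2):
`a_n(t) ≤ (πt)^{n/2} e^{-(n/2)(log(n/2) - 1)}`. -/
theorem iterated_integral_bound (n : ℕ) (hn : 0 < n) (t : ℝ) (ht : 0 < t) :
    aFun n t ≤ (Real.pi * t) ^ ((n:ℝ)/2)
      * Real.exp (-((n:ℝ)/2) * (Real.log ((n:ℝ)/2) - 1)) := by
  have : Nonempty (Fin n) := ⟨⟨0, hn⟩⟩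
  have sum_half : ∑ _ : Fin n, (1 / 2 : ℝ) = n / 2 := by simp [div_eq_mul_inv]
  have prod_Gamma_half : ∏ _ : Fin n, Real.Gamma (1 / 2) = Real.pi ^ ((n : ℝ) / 2) := by
    rw [Fin.prod_const, Real.Gamma_one_half_eq, ← Real.rpow_natCast,
      Real.rpow_div_two_eq_sqrt _ Real.pi_pos.le]
  have bound := setIntegral_solidSimplex_prod_rpow_le (ι := Fin n) (a := fun _ ↦ 1 / 2)
    (fun _ ↦ one_half_pos) ht
  rwa [← aFun_eq_setIntegral_solidSimplex, prod_Gamma_half, sum_half,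
    ← Real.mul_rpow Real.pi_pos.le ht.le] at bound
end

section
/- Fix an integer K ≥ 1. There exists a constant c > 0 such that for every h ∈ {0,1,…,K−1} and every t > 0, the transition probabilities of the continuous-time simple random walk on ℤ_+ reflected at 0 satisfy |p_t(K,h) − p_t(K+1,h)| ≤ c/(1 + t^{3/2}). Consequently, the integral ∫_0^∞ ( p_t(K,h) − p_t(K+1,h) ) dt converges absolutely, defining a real number a(h). -/
open MeasureTheory Filter

/-- `n`-fold convolution of the nearest neighbour step kernel `π(x, x±1) = 1/2` on `ℤ`. -/
noncomputable def stepn : ℕ → ℤ → ℤ → ℝ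
  | 0, x, y => if x = y then 1 else 0
  | (n+1), x, y => (1/2) * (stepn n x (y-1) + stepn n x (y+1))
/-- Transition probability of the continuous-time simple random walk on `ℤ` with jump
intensity `1/2` to each neighbour (total rate `1`). -/
noncomputable def qker (t : ℝ) (x y : ℤ) : ℝ :=
  ∑' n : ℕ, Real.exp (-t) * t^n / (Nat.factorial n) * stepn n x y

/-- `p_t(x,y)`: transition probability of the continuous-time simple random walk on
`ℤ_+` with jump intensity `1/2` along each edge, jumps from `0` to `-1` suppressed;
realized by folding the free walk on `ℤ` through the reflection `z ↦ -z-1`. -/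
noncomputable def pHalf (t : ℝ) (x y : ℕ) : ℝ :=
  qker t (x:ℤ) (y:ℤ) + qker t (x:ℤ) (-(y:ℤ)-1)

/-!
The free kernel is `q_t(x, y) = π⁻¹ ∫₀^π cos((x - y)θ) e^{-t(1 - cos θ)} dθ`, and `p_t(x, y)` is the
sum of two of its values. Since `|cos a - cos b| ≤ |a² - b²| / 2`, a difference of two values of
`q_t` is at most a constant times `∫₀^π θ² e^{-t(1 - cos θ)} dθ`. This integral is bounded in
`t ≥ 0`, and since `1 - cos θ ≥ 2θ²/π²` on `[0, π]` it is dominated by a Gaussian second moment,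
which is of order `t^{-3/2}`.
-/

section Analysis

open Real Set

theorem abs_cos_sub_cos_le_abs_sq_sub_sq_div_two (a b : ℝ) :
    |cos a - cos b| ≤ |a ^ 2 - b ^ 2| / 2 :=
  calc |cos a - cos b| = 2 * |sin ((a + b) / 2)| * |sin ((a - b) / 2)| := by
        rw [cos_sub_cos, abs_mul, abs_mul, abs_neg, abs_two]
    _ ≤ 2 * |(a + b) / 2| * |(a - b) / 2| := by
        gcongr 2 * ?_ * ?_ <;> exact abs_sin_le_abs
    _ = |a ^ 2 - b ^ 2| / 2 := by
        rw [sq_sub_sq, abs_mul, abs_div, abs_div, abs_two]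
        ring

theorem integral_cos_int_mul_zero_pi (k : ℤ) :
    ∫ θ in 0..π, cos (k * θ) = if k = 0 then π else 0 := by
  split_ifs with hk
  · simp [hk]
  · rw [intervalIntegral.integral_comp_mul_left cos (Int.cast_ne_zero.2 hk)]
    simp [sin_int_mul_pi]

theorem hasSum_exp_neg_mul_pow_div_factorial_mul_pow (t u : ℝ) :
    HasSum (fun n : ℕ => exp (-t) * t ^ n / n.factorial * u ^ n) (exp (-(t * (1 - u)))) := by
  have hsum : HasSum (fun n : ℕ => (t * u) ^ n / n.factorial) (exp (t * u)) := by
    simpa only [exp_eq_exp_ℝ] using NormedSpace.expSeries_div_hasSum_exp (t * u)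
  convert! hsum.mul_left (exp (-t)) using 1
  · funext n
    rw [mul_pow]
    ring
  · rw [← exp_add]
    ring_nf

theorem integral_Ioi_sq_mul_exp_neg_mul_sq {b : ℝ} (hb : 0 < b) :
    ∫ θ in Ioi 0, θ ^ 2 * exp (-b * θ ^ 2) = b ^ (-(3 / 2) : ℝ) * (√π / 4) := by
  have hmoment := integral_rpow_mul_exp_neg_mul_rpow two_pos (by norm_num : (-1 : ℝ) < 2) hb
  have hGamma : Gamma (3 / 2) = √π / 2 := by
    rw [show (3 / 2 : ℝ) = 1 / 2 + 1 by norm_num, Gamma_add_one (by norm_num), Gamma_one_half_eq]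
    ring
  simp only [rpow_two] at hmoment
  rw [hmoment, neg_div, show ((2 + 1) / 2 : ℝ) = 3 / 2 by norm_num, hGamma]
  ring

theorem integral_sq_mul_exp_neg_mul_sq_le {a b : ℝ} (ha : 0 ≤ a) (hb : 0 < b) :
    ∫ θ in 0..a, θ ^ 2 * exp (-b * θ ^ 2) ≤ b ^ (-(3 / 2) : ℝ) * (√π / 4) := by
  have hint : IntegrableOn (fun θ : ℝ => θ ^ 2 * exp (-b * θ ^ 2)) (Ioi 0) := by
    simpa only [rpow_two] using
      integrableOn_rpow_mul_exp_neg_mul_rpow (by norm_num : (-1 : ℝ) < 2) two_pos hb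
  rw [intervalIntegral.integral_of_le ha, ← integral_Ioi_sq_mul_exp_neg_mul_sq hb]
  exact setIntegral_mono_set hint (.of_forall fun θ => by positivity)
    Ioc_subset_Ioi_self.eventuallyLE

theorem integrableOn_Ioi_inv_one_add_rpow {s : ℝ} (hs : 1 < s) :
    IntegrableOn (fun t : ℝ => (1 + t ^ s)⁻¹) (Ioi 0) := by
  have hpos : ∀ t : ℝ, 0 ≤ t → 0 < 1 + t ^ s := fun t ht => by positivity
  have hcont : ContinuousOn (fun t : ℝ => (1 + t ^ s)⁻¹) (Ici 0) := by
    have hrpow : Continuous fun t : ℝ => t ^ s := continuous_rpow_const (by linarith)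
    exact (continuous_const.add hrpow).continuousOn.inv₀ fun t ht => (hpos t ht).ne'
  have hdecay : (fun t : ℝ => (1 + t ^ s)⁻¹) =O[atTop] fun t => t ^ (-s) := by
    refine Asymptotics.IsBigO.of_bound 1 ?_
    filter_upwards [eventually_gt_atTop 0] with t ht
    rw [one_mul, rpow_neg ht.le, norm_inv, norm_inv, norm_of_nonneg (hpos t ht.le).le,
      norm_of_nonneg (by positivity)]
    gcongr
    linarith
  exact ((hcont.locallyIntegrableOn measurableSet_Ici).integrableOn_of_isBigO_atTop hdecay
    ⟨Ioi 1, Ioi_mem_atTop 1, integrableOn_Ioi_rpow_of_lt (by linarith) one_pos⟩).mono_set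
      Ioi_subset_Ici_self

end Analysis

section SpectralMoment

open Real Set

/-- The second moment `∫₀^π θ² e^{-t(1 - cos θ)} dθ` of the Fourier transform of the free heat
kernel; it controls the spatial differences of the kernel at time `t`. -/
noncomputable def spectralMoment (t : ℝ) : ℝ :=
  ∫ θ in 0..π, θ ^ 2 * exp (-(t * (1 - cos θ)))

theorem spectralMoment_nonneg (t : ℝ) : 0 ≤ spectralMoment t :=
  intervalIntegral.integral_nonneg pi_pos.le fun _ _ => by positivity

theorem exp_neg_mul_one_sub_cos_le_one {t : ℝ} (ht : 0 ≤ t) (θ : ℝ) :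
    exp (-(t * (1 - cos θ))) ≤ 1 :=
  exp_le_one_iff.2 (neg_nonpos.2 (mul_nonneg ht (sub_nonneg.2 (cos_le_one θ))))

theorem exp_neg_mul_one_sub_cos_le_gaussian {t θ : ℝ} (ht : 0 ≤ t) (hθ : |θ| ≤ π) :
    exp (-(t * (1 - cos θ))) ≤ exp (-(2 / π ^ 2 * t) * θ ^ 2) := by
  have hcos : 2 / π ^ 2 * θ ^ 2 ≤ 1 - cos θ := by linarith [cos_le_one_sub_mul_cos_sq hθ]
  rw [exp_le_exp, neg_mul, neg_le_neg_iff, mul_comm _ t, mul_assoc]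
  gcongr

theorem spectralMoment_le_pi_pow_three_div_three {t : ℝ} (ht : 0 ≤ t) :
    spectralMoment t ≤ π ^ 3 / 3 :=
  calc spectralMoment t ≤ ∫ θ in 0..π, θ ^ 2 := by
        refine intervalIntegral.integral_mono_on pi_pos.le
          (Continuous.intervalIntegrable (by fun_prop) _ _)
          (Continuous.intervalIntegrable (by fun_prop) _ _) fun θ _ => ?_
        exact mul_le_of_le_one_right (sq_nonneg θ) (exp_neg_mul_one_sub_cos_le_one ht θ)
    _ = π ^ 3 / 3 := by norm_num [integral_pow]

theorem spectralMoment_le_rpow {t : ℝ} (ht : 0 < t) :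
    spectralMoment t ≤ (2 / π ^ 2 * t) ^ (-(3 / 2) : ℝ) * (√π / 4) :=
  calc spectralMoment t ≤ ∫ θ in 0..π, θ ^ 2 * exp (-(2 / π ^ 2 * t) * θ ^ 2) := by
        refine intervalIntegral.integral_mono_on pi_pos.le
          (Continuous.intervalIntegrable (by fun_prop) _ _)
          (Continuous.intervalIntegrable (by fun_prop) _ _) fun θ hθ => ?_
        exact mul_le_mul_of_nonneg_left (exp_neg_mul_one_sub_cos_le_gaussian ht.le
          ((abs_of_nonneg hθ.1).trans_le hθ.2)) (sq_nonneg θ)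
    _ ≤ (2 / π ^ 2 * t) ^ (-(3 / 2) : ℝ) * (√π / 4) :=
        integral_sq_mul_exp_neg_mul_sq_le pi_pos.le (by positivity)

theorem exists_spectralMoment_le_div_one_add_rpow :
    ∃ c : ℝ, 0 < c ∧ ∀ t : ℝ, 0 < t → spectralMoment t ≤ c / (1 + t ^ (3 / 2 : ℝ)) := by
  refine ⟨π ^ 3 / 3 + (2 / π ^ 2) ^ (-(3 / 2) : ℝ) * (√π / 4), by positivity, fun t ht => ?_⟩
  have hlarge : spectralMoment t * t ^ (3 / 2 : ℝ) ≤ (2 / π ^ 2) ^ (-(3 / 2) : ℝ) * (√π / 4) :=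
    calc spectralMoment t * t ^ (3 / 2 : ℝ)
        ≤ (2 / π ^ 2 * t) ^ (-(3 / 2) : ℝ) * (√π / 4) * t ^ (3 / 2 : ℝ) := by
          gcongr
          exact spectralMoment_le_rpow ht
      _ = (2 / π ^ 2) ^ (-(3 / 2) : ℝ) * (√π / 4) := by
          rw [mul_rpow (by positivity) ht.le, rpow_neg ht.le]
          field_simp
  rw [le_div_iff₀ (by positivity), mul_add, mul_one]
  exact add_le_add (spectralMoment_le_pi_pow_three_div_three ht.le) hlarge

end SpectralMoment

section FreeWalk

open Real

theorem stepn_eq_integral (n : ℕ) (x y : ℤ) :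
    stepn n x y = π⁻¹ * ∫ θ in 0..π, cos ((x - y) * θ) * cos θ ^ n := by
  induction n generalizing y with
  | zero =>
    have horth := integral_cos_int_mul_zero_pi (x - y)
    push_cast at horth
    simp only [stepn, pow_zero, mul_one, horth, sub_eq_zero]
    split_ifs <;> simp [pi_ne_zero]
  | succ n ih =>
    have hint (z : ℤ) : IntervalIntegrable (fun θ : ℝ => cos ((x - z) * θ) * cos θ ^ n)
        volume 0 π := Continuous.intervalIntegrable (by fun_prop) _ _
    have hprod (θ : ℝ) : cos ((x - (y - 1 : ℤ)) * θ) * cos θ ^ n +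
        cos ((x - (y + 1 : ℤ)) * θ) * cos θ ^ n = 2 * (cos ((x - y) * θ) * cos θ ^ (n + 1)) := by
      push_cast
      rw [show ((x : ℝ) - (y - 1)) * θ = (x - y) * θ + θ by ring,
        show ((x : ℝ) - (y + 1)) * θ = (x - y) * θ - θ by ring, cos_add, cos_sub]
      ring
    rw [stepn, ih, ih, ← mul_add, ← intervalIntegral.integral_add (hint _) (hint _)]
    simp only [hprod, intervalIntegral.integral_const_mul]
    ring

theorem hasSum_integral_cos_mul_exp_neg_mul_pow (t k : ℝ) :
    HasSum (fun n : ℕ => ∫ θ in 0..π,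
        exp (-t) * t ^ n / n.factorial * (cos (k * θ) * cos θ ^ n))
      (∫ θ in 0..π, cos (k * θ) * exp (-(t * (1 - cos θ)))) := by
  refine intervalIntegral.hasSum_integral_of_dominated_convergence
    (fun n _ => exp (-t) * (|t| ^ n / n.factorial))
    (fun n => Continuous.aestronglyMeasurable (by fun_prop))
    (fun n => .of_forall fun θ _ => ?_)
    (.of_forall fun θ _ => (summable_pow_div_factorial |t|).mul_left _)
    intervalIntegrable_const (.of_forall fun θ _ => ?_)
  · have hcos : |cos (k * θ)| * |cos θ| ^ n ≤ 1 :=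
      mul_le_one₀ (abs_cos_le_one _) (by positivity) (pow_le_one₀ (abs_nonneg _) (abs_cos_le_one _))
    rw [norm_eq_abs, abs_mul, abs_mul, abs_div, abs_mul, abs_pow, abs_pow, abs_exp,
      Nat.abs_cast, mul_div_assoc]
    exact mul_le_of_le_one_right (by positivity) hcos
  · simpa only [mul_left_comm] using
      (hasSum_exp_neg_mul_pow_div_factorial_mul_pow t (cos θ)).mul_left (cos (k * θ))

theorem qker_eq_integral (t : ℝ) (x y : ℤ) :
    qker t x y = π⁻¹ * ∫ θ in 0..π, cos ((x - y) * θ) * exp (-(t * (1 - cos θ))) := by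
  rw [qker, ← ((hasSum_integral_cos_mul_exp_neg_mul_pow t (x - y)).mul_left π⁻¹).tsum_eq]
  refine tsum_congr fun n => ?_
  rw [intervalIntegral.integral_const_mul, stepn_eq_integral, mul_left_comm]

theorem continuous_qker (x y : ℤ) : Continuous fun t => qker t x y := by
  simp only [qker_eq_integral]
  refine continuous_const.mul
    (intervalIntegral.continuous_parametric_intervalIntegral_of_continuous' ?_ 0 π)
  unfold Function.uncurry
  fun_prop

theorem abs_qker_sub_qker_le (t : ℝ) (x y x' y' : ℤ) :
    |qker t x y - qker t x' y'| ≤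
      π⁻¹ * (|((x : ℝ) - y) ^ 2 - (x' - y') ^ 2| / 2 * spectralMoment t) := by
  have hint (k : ℝ) : IntervalIntegrable (fun θ => cos (k * θ) * exp (-(t * (1 - cos θ))))
      volume 0 π := Continuous.intervalIntegrable (by fun_prop) _ _
  have hpointwise (θ : ℝ) :
      ‖cos ((x - y) * θ) * exp (-(t * (1 - cos θ))) -
          cos ((x' - y') * θ) * exp (-(t * (1 - cos θ)))‖ ≤
        |((x : ℝ) - y) ^ 2 - (x' - y') ^ 2| / 2 * (θ ^ 2 * exp (-(t * (1 - cos θ)))) :=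
    calc _ = |cos ((x - y) * θ) - cos ((x' - y') * θ)| * exp (-(t * (1 - cos θ))) := by
          rw [← sub_mul, norm_eq_abs, abs_mul, abs_exp]
      _ ≤ |((x - y) * θ) ^ 2 - ((x' - y') * θ) ^ 2| / 2 * exp (-(t * (1 - cos θ))) := by
          gcongr
          exact abs_cos_sub_cos_le_abs_sq_sub_sq_div_two _ _
      _ = _ := by
          rw [mul_pow, mul_pow, ← sub_mul, abs_mul, abs_sq]
          ring
  rw [qker_eq_integral, qker_eq_integral, ← mul_sub,
    ← intervalIntegral.integral_sub (hint _) (hint _), abs_mul, abs_of_pos (by positivity),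
    spectralMoment, ← intervalIntegral.integral_const_mul]
  gcongr
  exact intervalIntegral.norm_integral_le_of_norm_le pi_pos.le
    (.of_forall fun θ _ => hpointwise θ) (Continuous.intervalIntegrable (by fun_prop) _ _)

theorem abs_qker_sub_qker_succ_le (t : ℝ) (x y : ℤ) :
    |qker t x y - qker t (x + 1) y| ≤ π⁻¹ * (|(x : ℝ) - y| + 1 / 2) * spectralMoment t := by
  have hsq : |((x : ℝ) - y) ^ 2 - ((x + 1 : ℤ) - y) ^ 2| ≤ 2 * (|(x : ℝ) - y| + 1 / 2) := by
    push_cast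
    rw [show ((x : ℝ) - y) ^ 2 - (x + 1 - y) ^ 2 = -(2 * (x - y) + 1) by ring, abs_neg]
    refine (abs_add_le _ _).trans_eq ?_
    rw [abs_mul, abs_two, abs_one]
    ring
  refine (abs_qker_sub_qker_le t x y (x + 1) y).trans ?_
  rw [mul_assoc]
  have := spectralMoment_nonneg t
  gcongr
  linarith

end FreeWalk

section HalfLine

open Real

theorem continuous_pHalf (x y : ℕ) : Continuous fun t => pHalf t x y :=
  (continuous_qker _ _).add (continuous_qker _ _)

theorem abs_pHalf_sub_pHalf_succ_le (t : ℝ) (x y : ℕ) :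
    |pHalf t x y - pHalf t (x + 1) y| ≤ 2 * π⁻¹ * (x + y + 1) * spectralMoment t := by
  have hdirect := abs_qker_sub_qker_succ_le t x y
  have hreflected := abs_qker_sub_qker_succ_le t x (-y - 1)
  push_cast at hdirect hreflected
  have hdist : |(x : ℝ) - y| ≤ x + y :=
    abs_le.2 ⟨by linarith [x.cast_nonneg (α := ℝ)], by linarith [y.cast_nonneg (α := ℝ)]⟩
  have hdist' : |(x : ℝ) - (-y - 1)| = x + y + 1 := by
    rw [abs_of_nonneg] <;> linarith [x.cast_nonneg (α := ℝ), y.cast_nonneg (α := ℝ)]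
  calc |pHalf t x y - pHalf t (x + 1) y|
      ≤ |qker t x y - qker t (x + 1) y| + |qker t x (-y - 1) - qker t (x + 1) (-y - 1)| := by
        unfold pHalf
        push_cast
        rw [add_sub_add_comm]
        exact abs_add_le _ _
    _ ≤ π⁻¹ * (|(x : ℝ) - y| + 1 / 2) * spectralMoment t +
          π⁻¹ * (|(x : ℝ) - (-y - 1)| + 1 / 2) * spectralMoment t :=
        add_le_add hdirect hreflected
    _ = π⁻¹ * (|(x : ℝ) - y| + (x + y + 2)) * spectralMoment t := by
        rw [hdist']
        ring
    _ ≤ π⁻¹ * (x + y + (x + y + 2)) * spectralMoment t := by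
        have := spectralMoment_nonneg t
        gcongr
    _ = 2 * π⁻¹ * (x + y + 1) * spectralMoment t := by ring

theorem halfline_gradient_estimate_general :
    ∃ c : ℝ, 0 < c ∧
      (∀ (x y : ℕ) (t : ℝ), 0 < t →
        |pHalf t x y - pHalf t (x + 1) y| ≤ c * (x + y + 1) / (1 + t ^ (3 / 2 : ℝ))) ∧
      ∀ x y : ℕ, IntegrableOn (fun t => pHalf t x y - pHalf t (x + 1) y) (Set.Ioi 0) := by
  obtain ⟨c, hc, hmoment⟩ := exists_spectralMoment_le_div_one_add_rpow
  have hbound (x y : ℕ) (t : ℝ) (ht : 0 < t) : |pHalf t x y - pHalf t (x + 1) y| ≤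
      2 * π⁻¹ * c * (x + y + 1) / (1 + t ^ (3 / 2 : ℝ)) :=
    calc |pHalf t x y - pHalf t (x + 1) y|
        ≤ 2 * π⁻¹ * (x + y + 1) * spectralMoment t := abs_pHalf_sub_pHalf_succ_le t x y
      _ ≤ 2 * π⁻¹ * (x + y + 1) * (c / (1 + t ^ (3 / 2 : ℝ))) := by
          gcongr
          exact hmoment t ht
      _ = 2 * π⁻¹ * c * (x + y + 1) / (1 + t ^ (3 / 2 : ℝ)) := by ring
  refine ⟨2 * π⁻¹ * c, by positivity, hbound, fun x y => ?_⟩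
  have hdominating : IntegrableOn
      (fun t : ℝ => 2 * π⁻¹ * c * (x + y + 1) / (1 + t ^ (3 / 2 : ℝ))) (Set.Ioi 0) :=
    (integrableOn_Ioi_inv_one_add_rpow (by norm_num)).const_mul (2 * π⁻¹ * c * (x + y + 1))
  refine hdominating.mono'
    ((continuous_pHalf x y).sub (continuous_pHalf (x + 1) y)).aestronglyMeasurable ?_
  filter_upwards [ae_restrict_mem measurableSet_Ioi] with t ht using hbound x y t ht

end HalfLine

/-- **Gradient estimate for the half-line walk** (Lemma 6.2). There is `c > 0` such
that for every `h ∈ {0,…,K-1}` and `t > 0`,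
`|p_t(K,h) - p_t(K+1,h)| ≤ c/(1+t^{3/2})`; consequently
`∫_0^∞ (p_t(K,h) - p_t(K+1,h)) dt` converges absolutely, defining `a(h)`. -/
theorem halfline_gradient_estimate (K : ℕ) (hK : 1 ≤ K) :
    ∃ c : ℝ, 0 < c ∧
      (∀ h : ℕ, h < K → ∀ t : ℝ, 0 < t →
        |pHalf t K h - pHalf t (K+1) h| ≤ c / (1 + t ^ ((3:ℝ)/2)))
      ∧ (∀ h : ℕ, h < K →
        MeasureTheory.IntegrableOn (fun t => pHalf t K h - pHalf t (K+1) h)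
          (Set.Ioi (0:ℝ))) := by
  obtain ⟨c, hc, hbound, hint⟩ := halfline_gradient_estimate_general
  refine ⟨c * (2 * K), by positivity, fun h hh t ht => (hbound K h t ht).trans ?_,
    fun h _ => hint K h⟩
  have hh' : (h : ℝ) + 1 ≤ K := mod_cast hh
  gcongr
  linarith
end
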